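/- Let A ∈ ℝ^{m×n} with m ≤ n have rows a₁,…,a_m, let H₁, Z = (z₁,…,zₙ) ∈ ℝ^{n×n} be nonsingular, and define vectors u_j¹ = H₁ᵀ z_j for j = 1,…,n and, for i = 1,…,m, u_j^{i+1} = u_j^i − (a_iᵀ u_j^i / a_iᵀ u_i^i) u_i^i for j ≥ i+1, assuming a_iᵀ u_i^i ≠ 0 at each step. Let H₁' = Zᵀ H₁ and define the GILU Abaffian recursion H_{i+1}' = H_i' − (H_i' a_i)(e_iᵀ H_i')/(e_iᵀ H_i' a_i), with search vectors p_i = (H_i')ᵀ e_i, where e_i is the i-th unit vector of ℝⁿ. Then for every i = 1,…,m the GILU recursion is well defined with e_iᵀ H_i' a_i = a_iᵀ u_i^i ≠ 0, one has (H_i')ᵀ e_j = u_j^i for all j ≥ i, and in particular p_i = u_i^i. -/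

import Mathlib

open Matrix

/-!
Read row by row, the Abaffian update subtracts from every row the multiple of one fixed vector
`wᵀ H` that makes the result orthogonal to `a`. For `w = e_i` this vector is row `i` of `H`, so the
rows obey exactly the recursion of the vectors `u_j`. The vector recursion leaves
`u_j` undetermined once step `j` is done, which is why the rows are compared only for `j ≥ i`.
-/

section Gilu

variable {K ι κ : Type*} [Field K] [Fintype ι] [Fintype κ]

/-- The oblique projection of `v` along `q` onto the hyperplane orthogonal to `a`, i.e. one step of
the vector recursion. It is the identity if `a ⬝ᵥ q = 0`, by the convention `x / 0 = 0`. -/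
def obliqueProj (a q v : ι → K) : ι → K :=
  v - ((a ⬝ᵥ v) / (a ⬝ᵥ q)) • q

/-- The Abaffian update `H - (H a)(wᵀ H) / (wᵀ H a)`, where `a` stands for `Aᵀ v_i`; the GILU
subclass is the case in which `a` is a row of `A` and `w` a unit vector. -/
def abaffianUpdate (H : Matrix κ ι K) (a : ι → K) (w : κ → K) : Matrix κ ι K :=
  H - (w ⬝ᵥ H *ᵥ a)⁻¹ • vecMulVec (H *ᵥ a) (w ᵥ* H)

theorem abaffianUpdate_row (H : Matrix κ ι K) (a : ι → K) (w : κ → K) (j : κ) :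
    abaffianUpdate H a w j = obliqueProj a (w ᵥ* H) (H j) := by
  have hnum : (H *ᵥ a) j = a ⬝ᵥ H j := dotProduct_comm _ _
  have hden : w ⬝ᵥ H *ᵥ a = a ⬝ᵥ w ᵥ* H := by rw [dotProduct_mulVec, dotProduct_comm]
  ext l
  simp only [abaffianUpdate, obliqueProj, Matrix.sub_apply, Matrix.smul_apply, vecMulVec_apply,
    Pi.sub_apply, Pi.smul_apply, smul_eq_mul, hnum, hden]
  ring

theorem abaffianUpdate_single_row [DecidableEq κ] (H : Matrix κ ι K) (a : ι → K) (i j : κ) :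
    abaffianUpdate H a (Pi.single i 1) j = obliqueProj a (H i) (H j) := by
  rw [abaffianUpdate_row, single_one_vecMul, row_def]

theorem gilu_row_eq {m n : ℕ} (hmn : m ≤ n) (A : Matrix (Fin m) ι K)
    (H : ℕ → Matrix (Fin n) ι K) (u : ℕ → Fin n → ι → K)
    (hH : ∀ i : Fin m,
      H (i + 1) = abaffianUpdate (H i) (A i) (Pi.single (Fin.castLE hmn i) 1))
    (hu : ∀ i : Fin m, ∀ j : Fin n, (i : ℕ) < j →
      u (i + 1) j = obliqueProj (A i) (u i (Fin.castLE hmn i)) (u i j))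
    (h0 : ∀ j, H 0 j = u 0 j) {k : ℕ} (hk : k ≤ m) {j : Fin n} (hj : k ≤ j) :
    H k j = u k j := by
  induction k generalizing j with
  | zero => exact h0 j
  | succ k ih =>
    let i : Fin m := ⟨k, hk⟩
    have hpivot : H k (Fin.castLE hmn i) = u k (Fin.castLE hmn i) :=
      ih (Nat.le_of_succ_le hk) le_rfl
    have hrow : H k j = u k j := ih (Nat.le_of_succ_le hk) (Nat.le_of_succ_le hj)
    calc
      H (k + 1) j = obliqueProj (A i) (H k (Fin.castLE hmn i)) (H k j) := by
        rw [hH i, abaffianUpdate_single_row]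
      _ = obliqueProj (A i) (u k (Fin.castLE hmn i)) (u k j) := by rw [hpivot, hrow]
      _ = u (k + 1) j := (hu i j hj).symm

theorem gilu_vector_representation_general {m n : ℕ} (hmn : m ≤ n)
    (A : Matrix (Fin m) ι K) (H1 : Matrix κ ι K) (Z : Matrix κ (Fin n) K)
    (u : ℕ → Fin n → ι → K)
    (hu0 : ∀ j : Fin n, u 0 j = H1ᵀ *ᵥ (fun a => Z a j))
    (huden : ∀ i : Fin m, A i ⬝ᵥ u i (Fin.castLE hmn i) ≠ 0)
    (hu : ∀ i : Fin m, ∀ j : Fin n, (i : ℕ) < j →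
      u (i + 1) j = u i j -
        ((A i ⬝ᵥ u i j) / (A i ⬝ᵥ u i (Fin.castLE hmn i))) • u i (Fin.castLE hmn i))
    (H' : ℕ → Matrix (Fin n) ι K)
    (hH'0 : H' 0 = Zᵀ * H1)
    (hH' : ∀ i : Fin m,
      H' (i + 1) = H' i -
        ((H' i *ᵥ A i) (Fin.castLE hmn i))⁻¹ •
          vecMulVec (H' i *ᵥ A i) (Pi.single (Fin.castLE hmn i) 1 ᵥ* H' i))
    (p : Fin m → ι → K)
    (hp : ∀ i : Fin m, p i = (H' i)ᵀ *ᵥ Pi.single (Fin.castLE hmn i) 1) (i : Fin m) :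
    ((H' i *ᵥ A i) (Fin.castLE hmn i) = A i ⬝ᵥ u i (Fin.castLE hmn i) ∧
        (H' i *ᵥ A i) (Fin.castLE hmn i) ≠ 0) ∧
      (∀ j : Fin n, (i : ℕ) ≤ j → (H' i)ᵀ *ᵥ Pi.single j 1 = u i j) ∧
      p i = u i (Fin.castLE hmn i) := by
  have hupdate (i : Fin m) :
      H' (i + 1) = abaffianUpdate (H' i) (A i) (Pi.single (Fin.castLE hmn i) 1) := by
    rw [hH', abaffianUpdate, single_one_dotProduct]
  have hinit (j : Fin n) : H' 0 j = u 0 j := by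
    rw [hH'0, hu0, mul_apply_eq_vecMul, mulVec_transpose]
    rfl
  have hrow {j : Fin n} (hj : (i : ℕ) ≤ j) : H' i j = u i j :=
    gilu_row_eq hmn A H' u hupdate hu hinit i.is_le' hj
  have hunit (j : Fin n) (hj : (i : ℕ) ≤ j) : (H' i)ᵀ *ᵥ Pi.single j 1 = u i j :=
    (mulVec_single_one _ _).trans (hrow hj)
  have hpivot : (H' i *ᵥ A i) (Fin.castLE hmn i) = A i ⬝ᵥ u i (Fin.castLE hmn i) := by
    rw [mulVec, hrow le_rfl, dotProduct_comm]
  exact ⟨⟨hpivot, hpivot ▸ huden i⟩, hunit, (hp i).trans (hunit _ le_rfl)⟩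

end Gilu

/-- **Equivalence of the GILU subclass with the vector representation.**
With `u (0) j = H₁ᵀ z_j` (`z_j` the columns of `Z`), the `n−i` vector update
`u_j^{i+1} = u_j^i − (a_iᵀ u_j^i / a_iᵀ u_i^i) u_i^i`, and the GILU Abaffian
recursion started at `H₁' = Zᵀ H₁` (here `H' 0 = H₁'`), for every step `i` the
GILU recursion is well defined with `e_iᵀ H_i' a_i = a_iᵀ u_i^i ≠ 0`, one has
`(H_i')ᵀ e_j = u_j^i` for all `j ≥ i`, and in particular `p_i = u_i^i`. -/
theorem gilu_vector_representation
    (m n : ℕ) (hmn : m ≤ n)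
    (A : Matrix (Fin m) (Fin n) ℝ)
    (H1 Z : Matrix (Fin n) (Fin n) ℝ)
    (hH1 : IsUnit H1.det) (hZ : IsUnit Z.det)
    (u : ℕ → Fin n → (Fin n → ℝ))
    (hu0 : ∀ j : Fin n, u 0 j = H1ᵀ *ᵥ (fun a => Z a j))
    (huden : ∀ i : Fin m, A i ⬝ᵥ u ↑i (Fin.castLE hmn i) ≠ 0)
    (hu : ∀ i : Fin m, ∀ j : Fin n, (i : ℕ) < (j : ℕ) →
      u (↑i + 1) j = u ↑i j -
        ((A i ⬝ᵥ u ↑i j) / (A i ⬝ᵥ u ↑i (Fin.castLE hmn i))) •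
          u ↑i (Fin.castLE hmn i))
    (H' : ℕ → Matrix (Fin n) (Fin n) ℝ)
    (hH'0 : H' 0 = Zᵀ * H1)
    (hH' : ∀ i : Fin m,
      H' (↑i + 1) = H' ↑i -
        ((H' ↑i *ᵥ A i) (Fin.castLE hmn i))⁻¹ •
          vecMulVec (H' ↑i *ᵥ A i) (Pi.single (Fin.castLE hmn i) 1 ᵥ* H' ↑i))
    (p : Fin m → Fin n → ℝ)
    (hp : ∀ i : Fin m, p i = (H' ↑i)ᵀ *ᵥ Pi.single (Fin.castLE hmn i) 1) :
    ∀ i : Fin m,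
      ((H' ↑i *ᵥ A i) (Fin.castLE hmn i) = A i ⬝ᵥ u ↑i (Fin.castLE hmn i) ∧
        (H' ↑i *ᵥ A i) (Fin.castLE hmn i) ≠ 0) ∧
      (∀ j : Fin n, (i : ℕ) ≤ (j : ℕ) → (H' ↑i)ᵀ *ᵥ Pi.single j 1 = u ↑i j) ∧
      p i = u ↑i (Fin.castLE hmn i) := by
  exact gilu_vector_representation_general hmn A H1 Z u hu0 huden hu H' hH'0 hH' p hp
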